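/- For every integer k ≥ 0 and every p ∈ (1, ∞) there exists a constant C = C(k, p) > 0 such that for every f : [0, ∞) → ℝ of class C^(max(k,2)), one has Σ_{j=0}^{k} ‖(d/dx)^j [ x·If(x)/(1 + x²) ]‖_{L^p(0,∞)} ≤ C · Σ_{i=0}^{max(k−1,1)} ‖f^(1+i)‖_{L^p(0,∞)}, where If(x) = ∫₀^x (f(y) − f(0) − y f'(0))/y² dy, and the inequality is interpreted in [0, ∞]. -/

import Mathlib

open MeasureTheory

/-!
Write `T_c w (x) = x⁻⁽ᶜ⁺¹⁾ ∫₀ˣ yᶜ w(y) dy`. Taylor's formula says that the integrand of `If` is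
`T_1 (T_0 f'')`, so `If(x) / x = T_0 (T_1 (T_0 f''))` and the function to be estimated is this
triple average times `x² / (1 + x²)`. Since `(T_c w)' = T_{c+1} w'`, derivatives pass through the
averages, and Hardy's inequality bounds every derivative for which the corresponding derivative of
`f''` exists. Two more derivatives are needed; they come from the Euler equation
`x (T_c w)' = w - (c + 1) T_c w` at the price of one power of `x` each, and these powers are paid
for by the vanishing of `x² / (1 + x²)` to second order at `0`.
-/

section

open Set Filter Topology
open scoped ENNReal NNReal Nat

section IteratedDerivWithin

variable {𝕜 F : Type*} [NontriviallyNormedField 𝕜] [NormedAddCommGroup F] [NormedSpace 𝕜 F]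

lemma hasDerivWithinAt_iteratedDerivWithin {f : 𝕜 → F} {s : Set 𝕜} {x : 𝕜} {m : ℕ}
    {n : WithTop ℕ∞} (hf : ContDiffOn 𝕜 n f s) (hmn : m < n) (hs : UniqueDiffOn 𝕜 s) (hx : x ∈ s) :
    HasDerivWithinAt (iteratedDerivWithin m f s) (iteratedDerivWithin (m + 1) f s x) s x :=
  iteratedDerivWithin_succ (f := f) ▸
    (hf.differentiableOn_iteratedDerivWithin hmn hs x hx).hasDerivWithinAt

lemma iteratedDerivWithin_add_eq_comp (f : 𝕜 → F) (s : Set 𝕜) (i l : ℕ) :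
    iteratedDerivWithin (i + l) f s = iteratedDerivWithin i (iteratedDerivWithin l f s) s := by
  have hiter (k : ℕ) (g : 𝕜 → F) : iteratedDerivWithin k g s = (derivWithin · s)^[k] g :=
    funext fun _ ↦ iteratedDerivWithin_eq_iterate
  rw [hiter, hiter, hiter, Function.iterate_add_apply]

lemma iteratedDerivWithin_eqOn_of_isOpen_of_subset {s t : Set 𝕜} (hs : IsOpen s) (hst : s ⊆ t)
    (f : 𝕜 → F) (l : ℕ) : EqOn (iteratedDerivWithin l f s) (iteratedDerivWithin l f t) s := by
  intro y hy
  have hst_eq : s =ᶠ[𝓝 y] t := by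
    filter_upwards [hs.mem_nhds hy] with z hz using propext ⟨fun _ ↦ hst hz, fun _ ↦ hz⟩
  rw [iteratedDerivWithin, iteratedDerivWithin, iteratedFDerivWithin_congr_set hst_eq]

lemma contDiffOn_iteratedDerivWithin {f : 𝕜 → F} {s : Set 𝕜} {n m : WithTop ℕ∞} {l : ℕ}
    (hf : ContDiffOn 𝕜 n f s) (hs : UniqueDiffOn 𝕜 s) (hmn : m + l ≤ n) :
    ContDiffOn 𝕜 m (iteratedDerivWithin l f s) s := by
  induction l generalizing m with
  | zero => simpa using hf.of_le (by simpa using hmn)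
  | succ l ih =>
    rw [iteratedDerivWithin_succ]
    exact (ih (m := m + 1) (by rwa [Nat.cast_succ, add_comm (l : WithTop ℕ∞), ← add_assoc]
      at hmn)).derivWithin hs le_rfl

end IteratedDerivWithin

/-- `1 / (1 + x²)` is the real part of `1 / (1 + ix)`. -/
lemma iteratedDeriv_one_add_sq_inv (i : ℕ) :
    iteratedDeriv i (fun x : ℝ ↦ (1 + x ^ 2)⁻¹) =
      fun x : ℝ ↦ (i ! * (-Complex.I) ^ i * ((1 + x * Complex.I) ^ (i + 1))⁻¹).re := by
  have hne (x : ℝ) : 1 + x * Complex.I ≠ 0 := fun h ↦ by simpa using congrArg Complex.re h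
  induction i with
  | zero =>
    funext x
    simp [Complex.inv_re, Complex.normSq_apply, sq]
  | succ i ih =>
    rw [iteratedDeriv_succ, ih]
    funext x
    have hlin : HasDerivAt (fun z : ℂ ↦ 1 + z * Complex.I) Complex.I x :=
      (hasDerivAt_mul_const _).const_add 1
    have hpow := ((hlin.fun_pow (i + 1)).fun_inv (pow_ne_zero _ (hne x))).const_mul
      (i ! * (-Complex.I) ^ i)
    rw [hpow.real_of_complex.deriv]
    have hne_x := hne x
    generalize 1 + x * Complex.I = z at hne_x ⊢
    congr 1
    push_cast [Nat.factorial_succ, Nat.add_sub_cancel]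
    field_simp
    ring

lemma abs_iteratedDeriv_one_add_sq_inv_le (i : ℕ) (x : ℝ) :
    |iteratedDeriv i (fun x : ℝ ↦ (1 + x ^ 2)⁻¹) x| ≤ (i ! : ℝ) := by
  have hnorm : 1 ≤ ‖1 + x * Complex.I‖ := by
    simpa using Complex.abs_re_le_norm (1 + x * Complex.I)
  rw [iteratedDeriv_one_add_sq_inv]
  refine (Complex.abs_re_le_norm _).trans ?_
  simpa [abs_of_pos] using mul_le_of_le_one_right (Nat.cast_nonneg (i !))
    (inv_le_one_of_one_le₀ (one_le_pow₀ hnorm))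

lemma iteratedDeriv_succ_sq_div_one_add_sq (i : ℕ) :
    iteratedDeriv (i + 1) (fun x : ℝ ↦ x ^ 2 / (1 + x ^ 2)) =
      -iteratedDeriv (i + 1) (fun x : ℝ ↦ (1 + x ^ 2)⁻¹) := by
  have hcompl : (fun x : ℝ ↦ x ^ 2 / (1 + x ^ 2)) = fun x ↦ 1 - (1 + x ^ 2)⁻¹ := by
    funext x
    field_simp
    ring
  funext x
  rw [hcompl, iteratedDeriv_const_sub i.succ_pos, Pi.neg_apply, iteratedDeriv_neg]

lemma abs_iteratedDeriv_succ_sq_div_one_add_sq_le (i : ℕ) (x : ℝ) :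
    |iteratedDeriv (i + 1) (fun x : ℝ ↦ x ^ 2 / (1 + x ^ 2)) x| ≤ ((i + 1)! : ℝ) := by
  rw [iteratedDeriv_succ_sq_div_one_add_sq, Pi.neg_apply, abs_neg]
  exact abs_iteratedDeriv_one_add_sq_inv_le (i + 1) x

lemma hasDerivAt_sq_div_one_add_sq (x : ℝ) :
    HasDerivAt (fun x : ℝ ↦ x ^ 2 / (1 + x ^ 2)) (2 * x / (1 + x ^ 2) ^ 2) x := by
  refine ((hasDerivAt_pow 2 x).fun_div ((hasDerivAt_pow 2 x).const_add 1)
    (by positivity)).congr_deriv ?_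
  congr 1
  push_cast
  ring

/-- The exponents `k > 0` express the vanishing to second order at `0`; as `2 - i` is truncated,
only `k = 0`, that is boundedness, remains for `i ≥ 2`. -/
lemma abs_iteratedDeriv_sq_div_one_add_sq_le {i k : ℕ} (hk : k ≤ 2 - i) {x : ℝ} (hx : 0 < x) :
    |iteratedDeriv i (fun x : ℝ ↦ x ^ 2 / (1 + x ^ 2)) x| ≤ 2 * (i ! : ℝ) * x ^ k := by
  have hsucc (j : ℕ) : |iteratedDeriv (j + 1) (fun x : ℝ ↦ x ^ 2 / (1 + x ^ 2)) x| ≤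
      2 * ((j + 1)! : ℝ) * x ^ 0 :=
    (abs_iteratedDeriv_succ_sq_div_one_add_sq_le j x).trans <| by
      rw [pow_zero, mul_one]
      exact le_mul_of_one_le_left (Nat.cast_nonneg _) one_le_two
  match i with
  | 0 =>
    rw [iteratedDeriv_zero, abs_of_pos (by positivity), div_le_iff₀ (by positivity)]
    interval_cases k <;>
      simp only [Nat.factorial_zero, Nat.cast_one, mul_one, pow_zero, pow_one] <;>
      nlinarith [pow_pos hx 3, pow_pos hx 4]
  | 1 =>
    interval_cases k
    · exact hsucc 0
    · rw [iteratedDeriv_one, (hasDerivAt_sq_div_one_add_sq x).deriv, abs_of_pos (by positivity)]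
      simpa using div_le_self (by positivity : 0 ≤ 2 * x) (one_le_pow₀ (by nlinarith))
  | j + 2 =>
    obtain rfl : k = 0 := by omega
    exact hsucc (j + 1)

variable {E : Type*} [NormedAddCommGroup E] [NormedSpace ℝ E] {w w' : ℝ → E} {x : ℝ}

lemma aestronglyMeasurable_pow_smul_iteratedDerivWithin {n i : ℕ} (hw : ContDiffOn ℝ n w (Ioi 0))
    (hi : i ≤ n) (k : ℕ) :
    AEStronglyMeasurable (fun x ↦ x ^ k • iteratedDerivWithin i w (Ioi 0) x)
      (volume.restrict (Ioi 0)) :=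
  ((continuousOn_id.pow k).smul (hw.continuousOn_iteratedDerivWithin (mod_cast hi)
    (uniqueDiffOn_Ioi 0))).aestronglyMeasurable measurableSet_Ioi

lemma eLpNorm_smul_le_of_abs_le_mul_pow {p : ℝ≥0∞} {η : ℝ → ℝ} {B : ℝ≥0} {k : ℕ}
    (hη : ∀ x > 0, |η x| ≤ B * x ^ k) (w : ℝ → E) :
    eLpNorm (fun x ↦ η x • w x) p (volume.restrict (Ioi 0)) ≤
      B * eLpNorm (fun x ↦ x ^ k • w x) p (volume.restrict (Ioi 0)) := by
  refine (eLpNorm_le_mul_eLpNorm_of_ae_le_mul (c := B) ?_ p).trans_eq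
    (by rw [ENNReal.ofReal_coe_nnreal])
  filter_upwards [ae_restrict_mem measurableSet_Ioi] with x hx
  rw [norm_smul, norm_smul, norm_pow, Real.norm_of_nonneg (le_of_lt hx), ← mul_assoc]
  exact mul_le_mul_of_nonneg_right (hη x hx) (norm_nonneg _)

/-- By Leibniz' rule, a multiplier vanishing to order `r` at `0` absorbs the weights with which the
derivatives of order more than `n` are controlled. -/
lemma eLpNorm_iteratedDerivWithin_smul_le {p : ℝ≥0∞} (hp : 1 ≤ p) {n r j : ℕ} (hj : j ≤ n + r)
    {η : ℝ → ℝ} {B : ℝ≥0} {A : ℝ≥0∞} (hη : ContDiffOn ℝ j η (Ioi 0)) (hw : ContDiffOn ℝ j w (Ioi 0))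
    (hB : ∀ i ≤ j, ∀ k ≤ r - i, ∀ x > 0, |iteratedDerivWithin i η (Ioi 0) x| ≤ B * x ^ k)
    (hA : ∀ i ≤ j, eLpNorm (fun x ↦ x ^ (i - n) • iteratedDerivWithin i w (Ioi 0) x) p
      (volume.restrict (Ioi 0)) ≤ A) :
    eLpNorm (iteratedDerivWithin j (η • w) (Ioi 0)) p (volume.restrict (Ioi 0)) ≤
      2 ^ j * (B * A) := by
  set term : ℕ → ℝ → E := fun i x ↦
    iteratedDerivWithin i η (Ioi 0) x • iteratedDerivWithin (j - i) w (Ioi 0) x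
  have hleibniz : iteratedDerivWithin j (η • w) (Ioi 0) =ᵐ[volume.restrict (Ioi 0)]
      ∑ i ∈ Finset.range (j + 1), j.choose i • term i := by
    filter_upwards [ae_restrict_mem measurableSet_Ioi] with x hx
    rw [iteratedDerivWithin_smul hx (uniqueDiffOn_Ioi 0) (hη x hx) (hw x hx), Finset.sum_apply]
    rfl
  have hmeas (i : ℕ) (hi : i ∈ Finset.range (j + 1)) :
      AEStronglyMeasurable (j.choose i • term i) (volume.restrict (Ioi 0)) :=
    (((hη.continuousOn_iteratedDerivWithin (mod_cast Finset.mem_range_succ_iff.1 hi)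
      (uniqueDiffOn_Ioi 0)).smul (hw.continuousOn_iteratedDerivWithin (mod_cast j.sub_le i)
        (uniqueDiffOn_Ioi 0))).aestronglyMeasurable measurableSet_Ioi).const_smul (j.choose i)
  have hterm (i : ℕ) (hi : i ∈ Finset.range (j + 1)) :
      eLpNorm (j.choose i • term i) p (volume.restrict (Ioi 0)) ≤ j.choose i * (B * A) := by
    have hij := Finset.mem_range_succ_iff.1 hi
    rw [eLpNorm_nsmul]
    gcongr
    exact (eLpNorm_smul_le_of_abs_le_mul_pow (hB i hij (j - i - n) (by omega)) _).trans
      (by gcongr; exact hA (j - i) (j.sub_le i))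
  calc
    _ ≤ ∑ i ∈ Finset.range (j + 1), eLpNorm (j.choose i • term i) p (volume.restrict (Ioi 0)) :=
      (eLpNorm_congr_ae hleibniz).trans_le (eLpNorm_sum_le hmeas hp)
    _ ≤ ∑ i ∈ Finset.range (j + 1), (j.choose i * (B * A)) := Finset.sum_le_sum hterm
    _ = 2 ^ j * (B * A) := by
      rw [← Finset.sum_mul, ← Nat.cast_sum, Nat.sum_range_choose, Nat.cast_pow, Nat.cast_ofNat]

lemma map_mul_left_volume_Ioi {t : ℝ} (ht : 0 < t) :
    Measure.map (t * ·) (volume.restrict (Ioi 0)) =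
      ENNReal.ofReal t⁻¹ • volume.restrict (Ioi 0) := by
  have hpre : (t * ·) ⁻¹' Ioi (0 : ℝ) = Ioi 0 := by ext x; simp [ht]
  rw [← Measure.restrict_smul, ← abs_of_pos (inv_pos.2 ht), ← Real.map_volume_mul_left ht.ne',
    Measure.restrict_map (by fun_prop) measurableSet_Ioi, hpre]

lemma lintegral_Ioi_comp_mul_left {u : ℝ → ℝ≥0∞} (hu : Measurable u) {t : ℝ} (ht : 0 < t) :
    ∫⁻ x in Ioi 0, u (t * x) = ENNReal.ofReal t⁻¹ * ∫⁻ x in Ioi 0, u x := by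
  rw [← lintegral_map hu (by fun_prop), map_mul_left_volume_Ioi ht, lintegral_smul_measure,
    smul_eq_mul]

lemma ae_comp_mul_left_of_ae_Ioi {P : ℝ → Prop} (h : ∀ᵐ y ∂volume.restrict (Ioi 0), P y) {t : ℝ}
    (ht : 0 < t) : ∀ᵐ x ∂volume.restrict (Ioi 0), P (t * x) := by
  refine ae_of_ae_map (by fun_prop) ?_
  rw [map_mul_left_volume_Ioi ht]
  exact Measure.ae_smul_measure h _

lemma lintegral_Ioc_rpow_neg_inv {p q : ℝ} (hpq : p.HolderConjugate q) :
    ∫⁻ t in Ioc (0 : ℝ) 1, ENNReal.ofReal t ^ (-p⁻¹) = ENNReal.ofReal q := by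
  have hexp : -1 < -p⁻¹ := neg_lt_neg (inv_lt_one_of_one_lt₀ hpq.lt)
  have hint : IntegrableOn (fun t : ℝ ↦ t ^ (-p⁻¹)) (Ioc 0 1) :=
    (intervalIntegrable_iff_integrableOn_Ioc_of_le zero_le_one).1
      (intervalIntegral.intervalIntegrable_rpow' hexp)
  have hval : ∫ t in Ioc (0 : ℝ) 1, t ^ (-p⁻¹) = q := by
    rw [← intervalIntegral.integral_of_le zero_le_one, integral_rpow (.inl hexp), neg_add_eq_sub,
      hpq.one_sub_inv, Real.one_rpow, Real.zero_rpow hpq.symm.inv_ne_zero, sub_zero, one_div,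
      inv_inv]
  rw [← hval, ofReal_integral_eq_lintegral_ofReal hint]
  · exact setLIntegral_congr_fun measurableSet_Ioc fun t ht ↦ ENNReal.ofReal_rpow_of_pos ht.1
  · filter_upwards [ae_restrict_mem measurableSet_Ioc] with t ht using Real.rpow_nonneg ht.1.le _

/-- Hölder's inequality, with the weight `t ^ (1 / (p * q))` split off. -/
lemma lintegral_Ioc_comp_mul_rpow_le {u : ℝ → ℝ≥0∞} {p q : ℝ} (hpq : p.HolderConjugate q)
    (hu : Measurable u) (x : ℝ) :
    (∫⁻ t in Ioc (0 : ℝ) 1, u (t * x)) ^ p ≤ ENNReal.ofReal q ^ (p / q) *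
      ∫⁻ t in Ioc (0 : ℝ) 1, ENNReal.ofReal t ^ q⁻¹ * u (t * x) ^ p := by
  have hsplit : ∫⁻ t in Ioc (0 : ℝ) 1, u (t * x) = ∫⁻ t in Ioc (0 : ℝ) 1,
      ENNReal.ofReal t ^ (-(p⁻¹ * q⁻¹)) * (ENNReal.ofReal t ^ (p⁻¹ * q⁻¹) * u (t * x)) :=
    setLIntegral_congr_fun measurableSet_Ioc fun t ht ↦ by
      rw [← mul_assoc, ← ENNReal.rpow_add _ _ (ENNReal.ofReal_pos.2 ht.1).ne'
        ENNReal.ofReal_ne_top, neg_add_cancel, ENNReal.rpow_zero, one_mul]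
  have hholder := ENNReal.lintegral_mul_le_Lp_mul_Lq (volume.restrict (Ioc (0 : ℝ) 1)) hpq.symm
    (f := fun t ↦ ENNReal.ofReal t ^ (-(p⁻¹ * q⁻¹)))
    (g := fun t ↦ ENNReal.ofReal t ^ (p⁻¹ * q⁻¹) * u (t * x)) (by fun_prop) (by fun_prop)
  simp only [Pi.mul_apply, ENNReal.mul_rpow_of_nonneg _ _ hpq.nonneg, ← ENNReal.rpow_mul, neg_mul,
    inv_mul_cancel_right₀ hpq.symm.ne_zero, mul_right_comm _ _ p, inv_mul_cancel₀ hpq.ne_zero,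
    one_mul, lintegral_Ioc_rpow_neg_inv hpq] at hholder
  rw [hsplit]
  refine (ENNReal.rpow_le_rpow hholder hpq.nonneg).trans_eq ?_
  rw [ENNReal.mul_rpow_of_nonneg _ _ hpq.nonneg, ← ENNReal.rpow_mul, ← ENNReal.rpow_mul,
    one_div_mul_cancel hpq.ne_zero, ENNReal.rpow_one, one_div_mul_eq_div]

/-- **Hardy's inequality**. -/
lemma lintegral_Ioi_lintegral_Ioc_comp_mul_rpow_le {u : ℝ → ℝ≥0∞} {p q : ℝ}
    (hpq : p.HolderConjugate q) (hu : Measurable u) :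
    ∫⁻ x in Ioi 0, (∫⁻ t in Ioc (0 : ℝ) 1, u (t * x)) ^ p ≤
      ENNReal.ofReal q ^ p * ∫⁻ x in Ioi 0, u x ^ p := by
  have hscale : ∀ t ∈ Ioc (0 : ℝ) 1, ∫⁻ x in Ioi 0, ENNReal.ofReal t ^ q⁻¹ * u (t * x) ^ p =
      ENNReal.ofReal t ^ (-p⁻¹) * ∫⁻ x in Ioi 0, u x ^ p := by
    intro t ht
    have ht' : ENNReal.ofReal t ≠ 0 := (ENNReal.ofReal_pos.2 ht.1).ne'
    rw [lintegral_const_mul _ (by fun_prop), lintegral_Ioi_comp_mul_left (u := (u · ^ p))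
      (by fun_prop) ht.1, ENNReal.ofReal_inv_of_pos ht.1, ← ENNReal.rpow_neg_one, ← mul_assoc,
      ← ENNReal.rpow_add _ _ ht' ENNReal.ofReal_ne_top, ← sub_eq_add_neg, hpq.symm.inv_sub_one]
  calc
    _ ≤ ∫⁻ x in Ioi 0, ENNReal.ofReal q ^ (p / q) *
          ∫⁻ t in Ioc (0 : ℝ) 1, ENNReal.ofReal t ^ q⁻¹ * u (t * x) ^ p :=
      lintegral_mono fun x ↦ lintegral_Ioc_comp_mul_rpow_le hpq hu x
    _ = ENNReal.ofReal q ^ (p / q) *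
          ∫⁻ t in Ioc (0 : ℝ) 1, ENNReal.ofReal t ^ (-p⁻¹) * ∫⁻ x in Ioi 0, u x ^ p := by
      rw [lintegral_const_mul _ (by fun_prop), lintegral_lintegral_swap (by fun_prop),
        setLIntegral_congr_fun measurableSet_Ioc hscale]
    _ = ENNReal.ofReal q ^ p * ∫⁻ x in Ioi 0, u x ^ p := by
      rw [lintegral_mul_const _ (by fun_prop), lintegral_Ioc_rpow_neg_inv hpq, ← mul_assoc,
        hpq.div_conj_eq_sub_one]
      congr 2
      conv_rhs => rw [← sub_add_cancel p 1]
      rw [ENNReal.rpow_add_of_nonneg _ _ hpq.sub_one_pos.le zero_le_one, ENNReal.rpow_one]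

/-- The Hardy average of weight `c`, the dilation-invariant form of `x⁻⁽ᶜ⁺¹⁾ ∫₀ˣ yᶜ w(y) dy`;
integrating over `[0, 1]` gives it the right value at `x = 0` as well. -/
noncomputable def hardyMean (c : ℕ) (w : ℝ → E) (x : ℝ) : E :=
  ∫ t in (0 : ℝ)..1, t ^ c • w (t * x)

lemma enorm_hardyMean_le (c : ℕ) (w : ℝ → E) (x : ℝ) :
    ‖hardyMean c w x‖ₑ ≤ ∫⁻ t in Ioc (0 : ℝ) 1, ‖w (t * x)‖ₑ := by
  rw [hardyMean, intervalIntegral.integral_of_le zero_le_one]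
  refine (enorm_integral_le_lintegral_enorm _).trans
    (setLIntegral_mono' measurableSet_Ioc fun t ht ↦ ?_)
  rw [enorm_smul]
  refine mul_le_of_le_one_left' ?_
  rw [Real.enorm_of_nonneg (pow_nonneg ht.1.le c)]
  exact ENNReal.ofReal_le_one.2 (pow_le_one₀ ht.1.le ht.2)

lemma enorm_hardyMean_le_of_ae_le {u : ℝ → ℝ≥0∞} (hu : ∀ᵐ y ∂volume.restrict (Ioi 0), ‖w y‖ₑ ≤ u y)
    (c : ℕ) (hx : 0 < x) : ‖hardyMean c w x‖ₑ ≤ ∫⁻ t in Ioc (0 : ℝ) 1, u (t * x) := by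
  refine (enorm_hardyMean_le c w x).trans (lintegral_mono_ae ?_)
  filter_upwards [ae_mono (Measure.restrict_mono_set _ Ioc_subset_Ioi_self)
    (ae_comp_mul_left_of_ae_Ioi hu hx)] with t ht
  rwa [mul_comm]

lemma eLpNorm_hardyMean_le {p q : ℝ≥0∞} [hpq : p.HolderConjugate q] (hp : 1 < p)
    (hw : AEStronglyMeasurable w (volume.restrict (Ioi 0))) (c : ℕ) :
    eLpNorm (hardyMean c w) p (volume.restrict (Ioi 0)) ≤
      q * eLpNorm w p (volume.restrict (Ioi 0)) := by
  rcases eq_or_ne p ∞ with rfl | hp_top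
  · rw [(ENNReal.HolderConjugate.eq_top_iff_eq_one ∞ q).1 rfl, one_mul, eLpNorm_exponent_top]
    refine eLpNormEssSup_le_of_ae_enorm_bound ?_
    filter_upwards [ae_restrict_mem measurableSet_Ioi] with x hx
    simpa using enorm_hardyMean_le_of_ae_le (enorm_ae_le_eLpNormEssSup w _) c hx
  have hq_top : q ≠ ∞ := ((ENNReal.HolderConjugate.lt_top_iff_one_lt q p).2 hp).ne
  have hpq' : p.toReal.HolderConjugate q.toReal :=
    ENNReal.HolderConjugate.toReal_of_ne_top hp_top hq_top
  have hu : ∀ᵐ y ∂volume.restrict (Ioi 0), ‖w y‖ₑ = hw.enorm.mk _ y := hw.enorm.ae_eq_mk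
  have hp0 : p ≠ 0 := (zero_lt_one.trans hp).ne'
  rw [eLpNorm_eq_lintegral_rpow_enorm_toReal hp0 hp_top,
    eLpNorm_eq_lintegral_rpow_enorm_toReal hp0 hp_top, one_div,
    ENNReal.rpow_inv_le_iff hpq'.pos, ENNReal.mul_rpow_of_nonneg _ _ hpq'.nonneg,
    ENNReal.rpow_inv_rpow hpq'.ne_zero]
  calc
    _ ≤ ∫⁻ x in Ioi 0, (∫⁻ t in Ioc (0 : ℝ) 1, hw.enorm.mk _ (t * x)) ^ p.toReal :=
      setLIntegral_mono' measurableSet_Ioi fun x hx ↦ ENNReal.rpow_le_rpow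
        (enorm_hardyMean_le_of_ae_le (hu.mono fun _ hy ↦ hy.le) c hx) hpq'.nonneg
    _ ≤ ENNReal.ofReal q.toReal ^ p.toReal * ∫⁻ x in Ioi 0, hw.enorm.mk _ x ^ p.toReal :=
      lintegral_Ioi_lintegral_Ioc_comp_mul_rpow_le hpq' hw.enorm.measurable_mk
    _ = _ := by
      rw [ENNReal.ofReal_toReal hq_top]
      congr 1
      exact lintegral_congr_ae (hu.mono fun y hy ↦ congrArg (· ^ p.toReal) hy.symm)

lemma hardyMean_congr (h : EqOn w w' (Ici 0)) : EqOn (hardyMean c w) (hardyMean c w') (Ici 0) :=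
  fun x hx ↦ intervalIntegral.integral_congr fun t ht ↦ by
    rw [uIcc_of_le zero_le_one] at ht
    simp only [h (mul_nonneg ht.1 hx : (0 : ℝ) ≤ t * x)]

lemma pow_succ_smul_hardyMean (c : ℕ) (w : ℝ → E) (x : ℝ) :
    x ^ (c + 1) • hardyMean c w x = ∫ y in (0 : ℝ)..x, y ^ c • w y := by
  have h := intervalIntegral.smul_integral_comp_mul_right (a := 0) (b := 1) (fun y ↦ y ^ c • w y) x
  simp only [mul_pow, mul_comm _ (x ^ c), mul_smul, intervalIntegral.integral_smul, zero_mul,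
    one_mul] at h
  rw [pow_succ', mul_smul, hardyMean, h]

lemma intervalIntegrable_pow_smul (hw : ContinuousOn w (Ici 0)) (c : ℕ) (hx : 0 ≤ x) :
    IntervalIntegrable (fun y ↦ y ^ c • w y) volume 0 x :=
  ((continuousOn_id.pow c).smul (hw.mono Icc_subset_Ici_self)).intervalIntegrable_of_Icc hx

lemma continuousOn_hardyMean (hw : ContinuousOn w (Ici 0)) (c : ℕ) :
    ContinuousOn (hardyMean c w) (Ici 0) := by
  have hext : Continuous fun y ↦ w (max 0 y) :=
    hw.comp_continuous (by fun_prop) fun y ↦ le_max_left 0 y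
  have hcont : Continuous (hardyMean c fun y ↦ w (max 0 y)) :=
    intervalIntegral.continuous_parametric_intervalIntegral_of_continuous'
      (f := fun x t ↦ t ^ c • w (max 0 (t * x)))
      ((continuous_snd.pow c).smul (hext.comp (continuous_snd.mul continuous_fst))) 0 1
  refine hcont.continuousOn.congr (hardyMean_congr fun y hy ↦ ?_)
  rw [max_eq_right (mem_Ici.1 hy)]

variable [CompleteSpace E]

lemma hasDerivAt_hardyMean (hw : ContinuousOn w (Ici 0)) (c : ℕ) (hx : 0 < x) :
    HasDerivAt (hardyMean c w) (x⁻¹ • (w x - (c + 1 : ℝ) • hardyMean c w x)) x := by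
  have hcont : ContinuousOn (fun y ↦ y ^ c • w y) (Ioi 0) :=
    (continuousOn_id.pow c).smul (hw.mono Ioi_subset_Ici_self)
  have hint : HasDerivAt (fun x ↦ ∫ y in (0 : ℝ)..x, y ^ c • w y) (x ^ c • w x) x :=
    intervalIntegral.integral_hasDerivAt_right (intervalIntegrable_pow_smul hw c hx.le)
      (hcont.stronglyMeasurableAtFilter isOpen_Ioi x hx) (hcont.continuousAt (Ioi_mem_nhds hx))
  have heq : hardyMean c w =ᶠ[𝓝 x]
      fun x ↦ (x ^ (c + 1))⁻¹ • ∫ y in (0 : ℝ)..x, y ^ c • w y := by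
    filter_upwards [Ioi_mem_nhds hx] with y hy
    rw [← pow_succ_smul_hardyMean, inv_smul_smul₀ (pow_ne_zero _ (ne_of_gt hy))]
  refine ((((hasDerivAt_pow (c + 1) x).fun_inv (by positivity)).smul hint).congr_of_eventuallyEq
    heq).congr_deriv ?_
  rw [← pow_succ_smul_hardyMean]
  match_scalars <;> push_cast [pow_succ] <;> field_simp

/-- Integration by parts for `d/dt (tᶜ⁺¹ w(tx))` on `[0, 1]`. -/
lemma smul_hardyMean_succ (hw : ContinuousOn w (Ici 0)) (hw' : ContinuousOn w' (Ici 0))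
    (hderiv : ∀ y > 0, HasDerivAt w (w' y) y) (c : ℕ) (hx : 0 ≤ x) :
    x • hardyMean (c + 1) w' x = w x - (c + 1 : ℝ) • hardyMean c w x := by
  rcases hx.eq_or_lt with rfl | hx
  · simp [hardyMean, intervalIntegral.integral_smul_const, smul_smul,
      mul_inv_cancel₀ (Nat.cast_add_one_ne_zero (R := ℝ) c)]
  have hcont (m : ℕ) {u : ℝ → E} (hu : ContinuousOn u (Ici 0)) :
      ContinuousOn (fun t ↦ t ^ m • u (t * x)) (Icc 0 1) :=
    (continuousOn_id.pow m).smul <| hu.comp (by fun_prop) fun t ht ↦ mul_nonneg ht.1 hx.le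
  have hint (r : ℝ) (m : ℕ) {u : ℝ → E} (hu : ContinuousOn u (Ici 0)) :
      IntervalIntegrable (fun t ↦ r • (t ^ m • u (t * x))) volume 0 1 :=
    ((hcont m hu).const_smul r).intervalIntegrable_of_Icc zero_le_one
  have hparts : ∫ t in (0 : ℝ)..1,
      ((c + 1 : ℝ) • (t ^ c • w (t * x)) + x • (t ^ (c + 1) • w' (t * x))) = w x := by
    rw [intervalIntegral.integral_eq_sub_of_hasDerivAt_of_le zero_le_one (hcont (c + 1) hw)
      (fun t ht ↦ ?_) ((hint _ c hw).add (hint x (c + 1) hw'))]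
    · simp
    have hcomp : HasDerivAt (fun t ↦ w (t * x)) (x • w' (t * x)) t :=
      (hderiv (t * x) (mul_pos ht.1 hx)).scomp t (hasDerivAt_mul_const x)
    refine ((hasDerivAt_pow (c + 1) t).smul hcomp).congr_deriv ?_
    match_scalars <;> push_cast [Nat.add_sub_cancel] <;> ring
  rw [intervalIntegral.integral_add (hint _ c hw) (hint x (c + 1) hw'),
    intervalIntegral.integral_smul, intervalIntegral.integral_smul] at hparts
  exact eq_sub_of_add_eq' hparts

lemma hasDerivWithinAt_hardyMean (hw : ContinuousOn w (Ici 0)) (hw' : ContinuousOn w' (Ici 0))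
    (hderiv : ∀ y > 0, HasDerivAt w (w' y) y) (c : ℕ) (hx : 0 ≤ x) :
    HasDerivWithinAt (hardyMean c w) (hardyMean (c + 1) w' x) (Ici 0) x := by
  have hpos {y : ℝ} (hy : 0 < y) : HasDerivAt (hardyMean c w) (hardyMean (c + 1) w' y) y :=
    (hasDerivAt_hardyMean hw c hy).congr_deriv <| by
      rw [← smul_hardyMean_succ hw hw' hderiv c hy.le, inv_smul_smul₀ hy.ne']
  rcases hx.eq_or_lt with rfl | hx
  · refine hasDerivWithinAt_Ici_of_tendsto_deriv (s := Ioi 0)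
      (fun _ hy ↦ (hpos hy).differentiableAt.differentiableWithinAt)
      ((continuousOn_hardyMean hw c 0 self_mem_Ici).mono Ioi_subset_Ici_self) self_mem_nhdsWithin ?_
    refine ((continuousOn_hardyMean hw' (c + 1) 0 self_mem_Ici).mono Ioi_subset_Ici_self).congr' ?_
    filter_upwards [self_mem_nhdsWithin] with y hy using (hpos hy).deriv.symm
  · exact (hpos hx).hasDerivWithinAt

lemma hasDerivWithinAt_hardyMean_of_contDiffOn (hw : ContDiffOn ℝ 1 w (Ici 0)) (c : ℕ)
    (hx : 0 ≤ x) : HasDerivWithinAt (hardyMean c w)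
      (hardyMean (c + 1) (derivWithin w (Ici 0)) x) (Ici 0) x :=
  hasDerivWithinAt_hardyMean hw.continuousOn
    (hw.continuousOn_derivWithin (uniqueDiffOn_Ici 0) le_rfl)
    (fun _ hy ↦ ((hw.differentiableOn one_ne_zero).differentiableAt
      (Ici_mem_nhds hy)).hasDerivAt.congr_deriv (derivWithin_of_mem_nhds (Ici_mem_nhds hy)).symm)
    c hx

lemma contDiffOn_hardyMean {n : ℕ} (hw : ContDiffOn ℝ n w (Ici 0)) (c : ℕ) :
    ContDiffOn ℝ n (hardyMean c w) (Ici 0) := by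
  induction n generalizing w c with
  | zero => exact contDiffOn_zero.2 (continuousOn_hardyMean hw.continuousOn c)
  | succ n ih =>
    have hderiv (x) (hx : x ∈ Ici (0 : ℝ)) := hasDerivWithinAt_hardyMean_of_contDiffOn
      (hw.of_le (mod_cast Nat.le_add_left 1 n)) c hx
    rw [Nat.cast_succ, contDiffOn_succ_iff_derivWithin (uniqueDiffOn_Ici 0)] at hw ⊢
    exact ⟨fun x hx ↦ (hderiv x hx).differentiableWithinAt, by simp, (ih hw.2.2 (c + 1)).congr
      fun x hx ↦ (hderiv x hx).derivWithin (uniqueDiffOn_Ici 0 x hx)⟩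

lemma iteratedDerivWithin_hardyMean {n : ℕ} (hw : ContDiffOn ℝ n w (Ici 0)) (c : ℕ) :
    EqOn (iteratedDerivWithin n (hardyMean c w) (Ici 0))
      (hardyMean (c + n) (iteratedDerivWithin n w (Ici 0))) (Ici 0) := by
  induction n generalizing w c with
  | zero => simp [EqOn]
  | succ n ih =>
    intro x hx
    have hderiv : EqOn (derivWithin (hardyMean c w) (Ici 0))
        (hardyMean (c + 1) (derivWithin w (Ici 0))) (Ici 0) := fun y hy ↦
      (hasDerivWithinAt_hardyMean_of_contDiffOn (hw.of_le (mod_cast Nat.le_add_left 1 n)) c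
        hy).derivWithin (uniqueDiffOn_Ici 0 y hy)
    rw [iteratedDerivWithin_succ', iteratedDerivWithin_congr hderiv hx]
    rw [Nat.cast_succ, contDiffOn_succ_iff_derivWithin (uniqueDiffOn_Ici 0)] at hw
    rw [ih hw.2.2 (c + 1) hx, iteratedDerivWithin_succ', Nat.add_right_comm, Nat.add_assoc]

lemma contDiffOn_Ioi_hardyMean {n : ℕ} (hw : ContinuousOn w (Ici 0))
    (hwn : ContDiffOn ℝ n w (Ioi 0)) (c : ℕ) :
    ContDiffOn ℝ (n + 1 : ℕ) (hardyMean c w) (Ioi 0) := by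
  have hsucc (m : ℕ) (hm : ContDiffOn ℝ m (hardyMean c w) (Ioi 0))
      (hwm : ContDiffOn ℝ m w (Ioi 0)) :
      ContDiffOn ℝ (m + 1 : ℕ) (hardyMean c w) (Ioi 0) := by
    rw [Nat.cast_succ, contDiffOn_succ_iff_deriv_of_isOpen isOpen_Ioi]
    refine ⟨fun x hx ↦ (hasDerivAt_hardyMean hw c hx).differentiableAt.differentiableWithinAt,
      by simp, ?_⟩
    exact ((contDiffOn_id.inv fun x hx ↦ ne_of_gt hx).smul (hwm.sub (hm.const_smul _))).congr
      fun x hx ↦ (hasDerivAt_hardyMean hw c hx).deriv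
  induction n with
  | zero =>
    exact hsucc 0 (contDiffOn_zero.2 ((continuousOn_hardyMean hw c).mono Ioi_subset_Ici_self)) hwn
  | succ n ih => exact hsucc _ (ih (hwn.of_le (mod_cast n.le_succ))) hwn

/-- The Euler equation `x (T w)' = w - (c + 1) T w`, differentiated `n` times. -/
lemma smul_iteratedDerivWithin_succ_hardyMean {n : ℕ} (hw : ContinuousOn w (Ici 0))
    (hwn : ContDiffOn ℝ n w (Ioi 0)) (c : ℕ) (hx : 0 < x) :
    x • iteratedDerivWithin (n + 1) (hardyMean c w) (Ioi 0) x = iteratedDerivWithin n w (Ioi 0) x -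
      (c + 1 + n : ℝ) • iteratedDerivWithin n (hardyMean c w) (Ioi 0) x := by
  induction n generalizing x with
  | zero =>
    rw [iteratedDerivWithin_one, derivWithin_of_mem_nhds (Ioi_mem_nhds hx),
      (hasDerivAt_hardyMean hw c hx).deriv, smul_inv_smul₀ hx.ne']
    simp
  | succ n ih =>
    have hT : ContDiffOn ℝ (n + 1 + 1 : ℕ) (hardyMean c w) (Ioi 0) :=
      contDiffOn_Ioi_hardyMean hw hwn c
    have hD (m : ℕ) (hm : m ≤ n + 1) := hasDerivWithinAt_iteratedDerivWithin hT
      (mod_cast Nat.lt_succ_of_le hm) (uniqueDiffOn_Ioi 0) hx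
    have hL := (hasDerivWithinAt_id x _).smul (hD (n + 1) le_rfl)
    have hR := (hasDerivWithinAt_iteratedDerivWithin hwn (mod_cast n.lt_succ_self)
      (uniqueDiffOn_Ioi 0) hx).sub ((hD n n.le_succ).const_smul (c + 1 + n : ℝ))
    have heq := (uniqueDiffOn_Ioi 0 x hx).eq_deriv _
      (hL.congr_of_mem (fun y hy ↦ (ih (hwn.of_le (mod_cast n.le_succ)) hy).symm) hx) hR
    rw [one_smul, id, ← eq_sub_iff_add_eq] at heq
    rw [heq, Nat.cast_succ]
    module

lemma eLpNorm_pow_smul_iteratedDerivWithin_succ_hardyMean_le {p : ℝ≥0∞} (hp : 1 ≤ p) {i : ℕ}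
    (hw : ContinuousOn w (Ici 0)) (hwi : ContDiffOn ℝ i w (Ioi 0)) (c : ℕ) :
    eLpNorm (fun x ↦ x ^ (i + 1) • iteratedDerivWithin (i + 1) (hardyMean c w) (Ioi 0) x) p
        (volume.restrict (Ioi 0)) ≤
      eLpNorm (fun x ↦ x ^ i • iteratedDerivWithin i w (Ioi 0) x) p (volume.restrict (Ioi 0)) +
        (c + 1 + i) * eLpNorm (fun x ↦ x ^ i • iteratedDerivWithin i (hardyMean c w) (Ioi 0) x) p
          (volume.restrict (Ioi 0)) := by
  have hT : ContDiffOn ℝ (i + 1 : ℕ) (hardyMean c w) (Ioi 0) := contDiffOn_Ioi_hardyMean hw hwi c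
  have heuler : (fun x ↦ x ^ (i + 1) • iteratedDerivWithin (i + 1) (hardyMean c w) (Ioi 0) x)
      =ᵐ[volume.restrict (Ioi 0)] (fun x ↦ x ^ i • iteratedDerivWithin i w (Ioi 0) x) -
        (c + 1 + i : ℝ) • fun x ↦ x ^ i • iteratedDerivWithin i (hardyMean c w) (Ioi 0) x := by
    filter_upwards [ae_restrict_mem measurableSet_Ioi] with x hx
    rw [pow_succ, mul_smul, smul_iteratedDerivWithin_succ_hardyMean hw hwi c hx, smul_sub,
      smul_comm, Pi.sub_apply, Pi.smul_apply]
  have hcoef : ‖(c + 1 + i : ℝ)‖ₑ = c + 1 + i := by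
    rw [Real.enorm_of_nonneg (by positivity)]
    exact_mod_cast ENNReal.ofReal_natCast (c + 1 + i)
  rw [eLpNorm_congr_ae heuler, ← hcoef, ← eLpNorm_const_smul]
  exact eLpNorm_sub_le (aestronglyMeasurable_pow_smul_iteratedDerivWithin hwi le_rfl i)
    ((aestronglyMeasurable_pow_smul_iteratedDerivWithin hT i.le_succ i).const_smul _) hp

variable {p q : ℝ≥0∞} [p.HolderConjugate q]

lemma eLpNorm_pow_smul_iteratedDerivWithin_hardyMean_le (hp : 1 < p) {A : ℝ≥0∞} {r : ℕ}
    (hw : ContinuousOn w (Ici 0)) (hwr : ContDiffOn ℝ r w (Ioi 0))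
    (hA : ∀ i ≤ r, eLpNorm (fun x ↦ x ^ i • iteratedDerivWithin i w (Ioi 0) x) p
      (volume.restrict (Ioi 0)) ≤ A) (c : ℕ) {i : ℕ} (hi : i ≤ r + 1) :
    eLpNorm (fun x ↦ x ^ i • iteratedDerivWithin i (hardyMean c w) (Ioi 0) x) p
      (volume.restrict (Ioi 0)) ≤ (q + c + r + 2) ^ (i + 1) * A := by
  induction i with
  | zero =>
    have hw0 : eLpNorm w p (volume.restrict (Ioi 0)) ≤ A := by simpa using hA 0 r.zero_le
    have hmeas : AEStronglyMeasurable w (volume.restrict (Ioi 0)) :=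
      (hw.mono Ioi_subset_Ici_self).aestronglyMeasurable measurableSet_Ioi
    simp only [pow_zero, one_smul, iteratedDerivWithin_zero, zero_add, pow_one]
    refine (eLpNorm_hardyMean_le (q := q) hp hmeas c).trans (mul_le_mul' ?_ hw0)
    simp only [add_assoc, le_self_add]
  | succ i ih =>
    have hir : i ≤ r := Nat.le_of_succ_le_succ hi
    calc
      _ ≤ A + (c + 1 + i) * ((q + c + r + 2) ^ (i + 1) * A) :=
        (eLpNorm_pow_smul_iteratedDerivWithin_succ_hardyMean_le hp.le hw
          (hwr.of_le (mod_cast hir)) c).trans <| by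
            gcongr
            exacts [hA i hir, ih (hir.trans r.le_succ)]
      _ ≤ (q + c + r + 2) ^ (i + 1) * A + (c + 1 + i) * ((q + c + r + 2) ^ (i + 1) * A) := by
        gcongr
        exact le_mul_of_one_le_left' (one_le_pow₀ (le_add_self.trans' one_le_two))
      _ = (c + i + 2) * ((q + c + r + 2) ^ (i + 1) * A) := by ring
      _ ≤ (q + c + r + 2) ^ (i + 1 + 1) * A := by
        rw [pow_succ' _ (i + 1), mul_assoc]
        gcongr
        exact le_add_self

/-- Each of the two outer averages gains a derivative at the price of a factor `x`. -/
lemma eLpNorm_pow_smul_iteratedDerivWithin_hardyMean_hardyMean_hardyMean_le (hp : 1 < p)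
    (hw : ContinuousOn w (Ici 0)) (l : ℕ) {i : ℕ} (hi : i ≤ 2) :
    eLpNorm (fun x ↦ x ^ i • iteratedDerivWithin i
        (hardyMean l (hardyMean (1 + l) (hardyMean l w))) (Ioi 0) x) p (volume.restrict (Ioi 0)) ≤
      (q + l + 3) ^ 6 * eLpNorm w p (volume.restrict (Ioi 0)) := by
  set K : ℝ≥0∞ := q + l + 3 with hK
  have hK₁ : 1 ≤ K := le_add_self.trans' (by norm_num)
  have hw₁ := continuousOn_hardyMean hw l
  have hw₁_smooth : ContDiffOn ℝ 0 (hardyMean l w) (Ioi 0) :=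
    contDiffOn_zero.2 (hw₁.mono Ioi_subset_Ici_self)
  have hnorm₁ : eLpNorm (hardyMean l w) p (volume.restrict (Ioi 0)) ≤
      K * eLpNorm w p (volume.restrict (Ioi 0)) :=
    (eLpNorm_hardyMean_le (q := q) hp ((hw.mono Ioi_subset_Ici_self).aestronglyMeasurable
      measurableSet_Ioi) l).trans (by gcongr; simp only [K, add_assoc, le_self_add])
  have hnorm₂ (i : ℕ) (hi : i ≤ 1) : eLpNorm (fun x ↦ x ^ i • iteratedDerivWithin i
      (hardyMean (1 + l) (hardyMean l w)) (Ioi 0) x) p (volume.restrict (Ioi 0)) ≤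
      K ^ 2 * (K * eLpNorm w p (volume.restrict (Ioi 0))) := by
    refine (eLpNorm_pow_smul_iteratedDerivWithin_hardyMean_le (q := q) hp (r := 0) hw₁ hw₁_smooth
      (by simpa using hnorm₁) (1 + l) hi).trans ?_
    rw [show q + (1 + l : ℕ) + (0 : ℕ) + 2 = K by push_cast; rw [hK]; ring]
    gcongr
    omega
  refine (eLpNorm_pow_smul_iteratedDerivWithin_hardyMean_le (q := q) hp (r := 1)
    (continuousOn_hardyMean hw₁ (1 + l)) (contDiffOn_Ioi_hardyMean hw₁ hw₁_smooth _) hnorm₂ l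
    hi).trans ?_
  rw [show q + l + (1 : ℕ) + 2 = K by push_cast; rw [hK]; ring,
    show K ^ 6 * eLpNorm w p (volume.restrict (Ioi 0)) =
      K ^ 3 * (K ^ 2 * (K * eLpNorm w p (volume.restrict (Ioi 0)))) by ring]
  gcongr
  omega

/-- The average over `(0, x)` of the Taylor quotient `(f(y) - f(0) - y f'(0)) / y²` of a function
`f` with second derivative `v`, extended to `x = 0` and written without quotients. -/
noncomputable def taylorQuotientMean (v : ℝ → E) : ℝ → E :=
  hardyMean 0 (hardyMean 1 (hardyMean 0 v))

lemma contDiffOn_Ioi_taylorQuotientMean {n : ℕ} (hw : ContDiffOn ℝ n w (Ici 0)) :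
    ContDiffOn ℝ (n + 2 : ℕ) (taylorQuotientMean w) (Ioi 0) := by
  have hw₁ := contDiffOn_hardyMean hw 0
  exact contDiffOn_Ioi_hardyMean (continuousOn_hardyMean hw₁.continuousOn 1)
    (contDiffOn_Ioi_hardyMean hw₁.continuousOn (hw₁.mono Ioi_subset_Ici_self) 1) 0

lemma iteratedDerivWithin_taylorQuotientMean {n : ℕ} (hw : ContDiffOn ℝ n w (Ici 0)) :
    EqOn (iteratedDerivWithin n (taylorQuotientMean w) (Ici 0))
      (hardyMean n (hardyMean (1 + n) (hardyMean n (iteratedDerivWithin n w (Ici 0)))))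
      (Ici 0) := by
  have hw₁ := contDiffOn_hardyMean hw 0
  unfold taylorQuotientMean
  simpa only [zero_add] using (iteratedDerivWithin_hardyMean (contDiffOn_hardyMean hw₁ 1) 0).trans
    (hardyMean_congr ((iteratedDerivWithin_hardyMean hw₁ 1).trans
      (hardyMean_congr (iteratedDerivWithin_hardyMean hw 0))))

lemma eLpNorm_pow_smul_iteratedDerivWithin_taylorQuotientMean_le (hp : 1 < p) {n : ℕ}
    (hw : ContDiffOn ℝ n w (Ici 0)) {i : ℕ} (hi : i ≤ 2) :
    eLpNorm (fun x ↦ x ^ i • iteratedDerivWithin (i + n) (taylorQuotientMean w) (Ioi 0) x) p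
        (volume.restrict (Ioi 0)) ≤
      (q + n + 3) ^ 6 * eLpNorm (iteratedDerivWithin n w (Ici 0)) p (volume.restrict (Ioi 0)) := by
  refine le_of_eq_of_le (eLpNorm_congr_ae ?_)
    (eLpNorm_pow_smul_iteratedDerivWithin_hardyMean_hardyMean_hardyMean_le hp
      (hw.continuousOn_iteratedDerivWithin le_rfl (uniqueDiffOn_Ici 0)) n hi)
  filter_upwards [ae_restrict_mem measurableSet_Ioi] with x hx
  rw [iteratedDerivWithin_add_eq_comp, iteratedDerivWithin_congr
    ((iteratedDerivWithin_eqOn_of_isOpen_of_subset isOpen_Ioi Ioi_subset_Ici_self _ n).trans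
      ((iteratedDerivWithin_taylorQuotientMean hw).mono Ioi_subset_Ici_self)) hx]

lemma smul_hardyMean_zero_eq_sub (hw : ContinuousOn w (Ici 0)) (hw' : ContinuousOn w' (Ici 0))
    (hderiv : ∀ y > 0, HasDerivAt w (w' y) y) (hx : 0 ≤ x) :
    x • hardyMean 0 w' x = w x - w 0 := by
  have hint := intervalIntegrable_pow_smul hw' 0 hx
  have hftc := pow_succ_smul_hardyMean 0 w' x
  simp only [pow_zero, one_smul, zero_add, pow_one] at hint hftc
  rw [hftc, intervalIntegral.integral_eq_sub_of_hasDerivAt_of_le hx (hw.mono Icc_subset_Ici_self)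
    (fun y hy ↦ hderiv y hy.1) hint]

/-- Taylor's formula with integral remainder. -/
lemma sq_smul_hardyMean_hardyMean_eq_sub {f f' f'' : ℝ → E} (hf : ContinuousOn f (Ici 0))
    (hf' : ContinuousOn f' (Ici 0)) (hf'' : ContinuousOn f'' (Ici 0))
    (hderiv : ∀ y > 0, HasDerivAt f (f' y) y) (hderiv' : ∀ y > 0, HasDerivAt f' (f'' y) y)
    (hx : 0 ≤ x) : x ^ 2 • hardyMean 1 (hardyMean 0 f'') x = f x - f 0 - x • f' 0 := by
  have hfirst : EqOn (fun y ↦ y ^ 1 • hardyMean 0 f'' y) (fun y ↦ y ^ 0 • (f' y - f' 0))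
      (uIcc 0 x) := fun y hy ↦ by
    rw [uIcc_of_le hx] at hy
    simpa only [pow_one, pow_zero, one_smul] using smul_hardyMean_zero_eq_sub hf' hf'' hderiv' hy.1
  have hsecond : x • hardyMean 0 (fun y ↦ f' y - f' 0) x =
      f x - x • f' 0 - (f 0 - (0 : ℝ) • f' 0) :=
    smul_hardyMean_zero_eq_sub (w := fun y ↦ f y - y • f' 0) (hf.sub (by fun_prop))
      (hf'.sub continuousOn_const) (fun y hy ↦ (hderiv y hy).sub
        (by simpa using (hasDerivAt_id y).smul_const (f' 0))) hx
  rw [pow_succ_smul_hardyMean, intervalIntegral.integral_congr hfirst, ← pow_succ_smul_hardyMean,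
    zero_add, pow_one, hsecond]
  simp only [zero_smul, sub_zero, sub_right_comm]

lemma smul_taylorQuotientMean_iteratedDerivWithin_two {f : ℝ → E} (hf : ContDiffOn ℝ 2 f (Ici 0))
    (hx : 0 ≤ x) : x • taylorQuotientMean (iteratedDerivWithin 2 f (Ici 0)) x =
      ∫ y in Ioo 0 x, (y ^ 2)⁻¹ • (f y - f 0 - y • derivWithin f (Ici 0) 0) := by
  have hderiv (m : ℕ) (hm : m < 2) (y : ℝ) (hy : 0 < y) :
      HasDerivAt (iteratedDerivWithin m f (Ici 0)) (iteratedDerivWithin (m + 1) f (Ici 0) y) y :=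
    (hasDerivWithinAt_iteratedDerivWithin hf (mod_cast hm) (uniqueDiffOn_Ici 0)
      (mem_Ici.2 hy.le)).hasDerivAt (Ici_mem_nhds hy)
  have hcont (m : ℕ) (hm : m ≤ 2) : ContinuousOn (iteratedDerivWithin m f (Ici 0)) (Ici 0) :=
    hf.continuousOn_iteratedDerivWithin (mod_cast hm) (uniqueDiffOn_Ici 0)
  have hmean := pow_succ_smul_hardyMean 0
    (hardyMean 1 (hardyMean 0 (iteratedDerivWithin 2 f (Ici 0)))) x
  simp only [zero_add, pow_one, pow_zero, one_smul] at hmean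
  rw [taylorQuotientMean, hmean, intervalIntegral.integral_of_le hx, integral_Ioc_eq_integral_Ioo]
  refine setIntegral_congr_fun measurableSet_Ioo fun y hy ↦ ?_
  rw [eq_inv_smul_iff₀ (pow_ne_zero 2 hy.1.ne'), sq_smul_hardyMean_hardyMean_eq_sub
    (hcont 0 zero_le_two) (hcont 1 one_le_two) (hcont 2 le_rfl) (hderiv 0 two_pos)
    (hderiv 1 one_lt_two) hy.1.le, iteratedDerivWithin_zero, iteratedDerivWithin_one]

lemma lintegral_ofReal_abs_rpow_rpow_eq_eLpNorm {α : Type*} [MeasurableSpace α] (μ : Measure α)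
    (u : α → ℝ) {p : ℝ} (hp : 0 < p) :
    (∫⁻ x, ENNReal.ofReal (|u x| ^ p) ∂μ) ^ (1 / p) = eLpNorm u (ENNReal.ofReal p) μ := by
  simp only [eLpNorm_eq_lintegral_rpow_enorm_toReal (ENNReal.ofReal_pos.2 hp).ne'
    ENNReal.ofReal_ne_top, ENNReal.toReal_ofReal hp.le, Real.enorm_eq_ofReal_abs,
    ENNReal.ofReal_rpow_of_nonneg (abs_nonneg _) hp.le]

lemma eLpNorm_iteratedDerivWithin_sq_div_smul_taylorQuotientMean_le (hp : 1 < p) {n j : ℕ}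
    (hw : ContDiffOn ℝ n w (Ici 0)) (hj : j ≤ n + 2) :
    eLpNorm (iteratedDerivWithin j
        ((fun x : ℝ ↦ x ^ 2 / (1 + x ^ 2)) • taylorQuotientMean w) (Ioi 0)) p
        (volume.restrict (Ioi 0)) ≤
      2 ^ j * ((2 * j ! : ℝ≥0) * ((q + n + 3) ^ 6 * ∑ i ∈ Finset.range (n + 1),
        eLpNorm (iteratedDerivWithin i w (Ici 0)) p (volume.restrict (Ioi 0)))) := by
  have hmult : ContDiff ℝ j fun x : ℝ ↦ x ^ 2 / (1 + x ^ 2) :=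
    (contDiff_id.pow 2).div (contDiff_const.add (contDiff_id.pow 2)) fun x ↦ by positivity
  refine eLpNorm_iteratedDerivWithin_smul_le hp.le hj hmult.contDiffOn
    ((contDiffOn_Ioi_taylorQuotientMean hw).of_le (mod_cast hj)) (fun i hi k hk x hx ↦ ?_)
    fun i hi ↦ ?_
  · rw [iteratedDerivWithin_of_isOpen isOpen_Ioi hx]
    refine (abs_iteratedDeriv_sq_div_one_add_sq_le hk hx).trans ?_
    push_cast
    gcongr
  · have hmin : min i n ≤ n := min_le_right i n
    have hsub : i - n + min i n = i := by omega
    have hbound := eLpNorm_pow_smul_iteratedDerivWithin_taylorQuotientMean_le (q := q) hp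
      (hw.of_le (mod_cast hmin)) (i := i - n) (by omega)
    rw [hsub] at hbound
    refine hbound.trans (mul_le_mul' (by gcongr) ?_)
    exact Finset.single_le_sum_of_canonicallyOrdered
      (f := fun i ↦ eLpNorm (iteratedDerivWithin i w (Ici 0)) p (volume.restrict (Ioi 0)))
      (Finset.mem_range_succ_iff.2 hmin)

lemma eLpNorm_iteratedDerivWithin_div_smul_integral_taylorQuotient_le (hp : 1 < p) {n j : ℕ}
    {f : ℝ → E} (hf : ContDiffOn ℝ (n + 2 : ℕ) f (Ici 0)) (hj : j ≤ n + 2) :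
    eLpNorm (iteratedDerivWithin j (fun x ↦ (x / (1 + x ^ 2)) •
        ∫ y in Ioo 0 x, (y ^ 2)⁻¹ • (f y - f 0 - y • derivWithin f (Ici 0) 0)) (Ioi 0)) p
        (volume.restrict (Ioi 0)) ≤
      2 ^ j * ((2 * j ! : ℝ≥0) * ((q + n + 3) ^ 6 * ∑ i ∈ Finset.range (n + 1),
        eLpNorm (iteratedDerivWithin (2 + i) f (Ici 0)) p (volume.restrict (Ioi 0)))) := by
  have hf'' : ContDiffOn ℝ n (iteratedDerivWithin 2 f (Ici 0)) (Ici 0) :=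
    contDiffOn_iteratedDerivWithin hf (uniqueDiffOn_Ici 0) (by norm_cast)
  have hmult : EqOn (fun x ↦ (x / (1 + x ^ 2)) •
      ∫ y in Ioo 0 x, (y ^ 2)⁻¹ • (f y - f 0 - y • derivWithin f (Ici 0) 0))
      ((fun x : ℝ ↦ x ^ 2 / (1 + x ^ 2)) •
        taylorQuotientMean (iteratedDerivWithin 2 f (Ici 0))) (Ioi 0) := fun x hx ↦ by
    dsimp only [Pi.smul_apply']
    rw [← smul_taylorQuotientMean_iteratedDerivWithin_two
      (hf.of_le (mod_cast Nat.le_add_left 2 n)) (le_of_lt hx), smul_smul, div_mul_eq_mul_div, sq]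
  rw [eLpNorm_congr_ae ((ae_restrict_mem measurableSet_Ioi).mono (iteratedDerivWithin_congr hmult))]
  simpa only [← iteratedDerivWithin_add_eq_comp, add_comm _ 2] using
    eLpNorm_iteratedDerivWithin_sq_div_smul_taylorQuotientMean_le hp hf'' hj

theorem xIf_sobolev_bound_general (k : ℕ) {p : ℝ≥0∞} (hp : 1 < p) :
    ∃ C > (0 : ℝ≥0), ∀ f : ℝ → E, ContDiffOn ℝ (max k 2 : ℕ) f (Ici 0) →
      ∑ j ∈ Finset.range (k + 1), eLpNorm (iteratedDerivWithin j
          (fun x ↦ (x / (1 + x ^ 2)) •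
            ∫ y in Ioo 0 x, (y ^ 2)⁻¹ • (f y - f 0 - y • derivWithin f (Ici 0) 0)) (Ioi 0)) p
          (volume.restrict (Ioi 0)) ≤
        C * ∑ i ∈ Finset.range (max (k - 1) 1),
          eLpNorm (iteratedDerivWithin (2 + i) f (Ici 0)) p (volume.restrict (Ioi 0)) := by
  obtain ⟨n, hn, hnk⟩ : ∃ n, max k 2 = n + 2 ∧ max (k - 1) 1 = n + 1 :=
    ⟨max k 2 - 2, by omega, by omega⟩
  obtain ⟨q, hpq⟩ : ∃ q : ℝ≥0, p.HolderConjugate q := by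
    have hconj : p.HolderConjugate p.conjExponent := .conjExponent hp.le
    refine ⟨p.conjExponent.toNNReal, ?_⟩
    rwa [ENNReal.coe_toNNReal ((ENNReal.HolderConjugate.lt_top_iff_one_lt _ p).2 hp).ne]
  refine ⟨(k + 1) * (2 ^ k * (2 * k ! * (q + n + 3) ^ 6)), by positivity, fun f hf ↦ ?_⟩
  rw [hn] at hf
  rw [hnk]
  have hterm (j : ℕ) (hj : j ∈ Finset.range (k + 1)) :=
    have hjk := Finset.mem_range_succ_iff.1 hj
    (eLpNorm_iteratedDerivWithin_div_smul_integral_taylorQuotient_le (q := q) hp hf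
      (j := j) (by omega)).trans (mul_le_mul' (pow_le_pow_right₀ one_le_two hjk)
        (mul_le_mul_left (show _ ≤ ((2 * k ! : ℝ≥0) : ℝ≥0∞) by gcongr) _))
  refine (Finset.sum_le_card_nsmul _ _ _ hterm).trans_eq ?_
  rw [Finset.card_range, nsmul_eq_mul]
  push_cast
  ring

end

/-- Sobolev bound for `x·If(x)/(1 + x²)`: for `k ≥ 0`, `p ∈ (1,∞)` there is `C = C(k,p) > 0`
such that for all `f` of class `C^(max(k,2))` on `[0,∞)`, with
`If(x) = ∫₀^x (f(y) − f(0) − y f'(0))/y² dy`,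
`Σ_{j≤k} ‖(d/dx)^j [x·If(x)/(1+x²)]‖_{L^p(0,∞)} ≤ C·Σ_{i=0}^{max(k−1,1)} ‖f^(1+i)‖_{L^p(0,∞)}`
(interpreted in `[0,∞]`). -/
theorem xIf_sobolev_bound (k : ℕ) (p : ℝ) (hp : 1 < p) :
    ∃ C > 0, ∀ f : ℝ → ℝ, ContDiffOn ℝ (max k 2 : ℕ) f (Set.Ici 0) →
      ∑ j ∈ Finset.range (k + 1),
          (∫⁻ x in Set.Ioi (0 : ℝ),
            ENNReal.ofReal
              (|iteratedDerivWithin j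
                  (fun x => x *
                    (∫ y in Set.Ioo (0 : ℝ) x,
                      (f y - f 0 - y * derivWithin f (Set.Ici 0) 0) / y ^ 2) / (1 + x ^ 2))
                  (Set.Ioi 0) x| ^ p)) ^ (1 / p)
        ≤ ENNReal.ofReal C *
          ∑ i ∈ Finset.range (max (k - 1) 1 + 1),
            (∫⁻ x in Set.Ioi (0 : ℝ),
              ENNReal.ofReal (|iteratedDerivWithin (1 + i) f (Set.Ici 0) x| ^ p)) ^ (1 / p) := by
  obtain ⟨C, hC, hbound⟩ := xIf_sobolev_bound_general (E := ℝ) k (ENNReal.one_lt_ofReal.2 hp)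
  simp only [smul_eq_mul, ← div_eq_inv_mul, div_mul_eq_mul_div] at hbound
  refine ⟨C, hC, fun f hf ↦ ?_⟩
  simp only [lintegral_ofReal_abs_rpow_rpow_eq_eLpNorm _ _ (zero_lt_one.trans hp),
    ENNReal.ofReal_coe_nnreal, Finset.sum_range_succ' _ (max (k - 1) 1), ← add_assoc,
    add_right_comm 1 _ 1]
  exact (hbound f hf).trans (mul_le_mul_right le_self_add _)
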